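/- For every d ≥ 1 and every n ≥ d+2, there exists a simple d-cycle on [n] over F_2 of size at least C(n-1,d) − C(n-1,d-2) + 1 (with the convention C(m,k) = 0 for k < 0). -/

import Mathlib

open Finset symmDiff

/-- The vertex set `[n] = {1, …, n}`. -/
def rng (n : ℕ) : Finset ℕ := Finset.Icc 1 n

/-- The set of `d`-simplices (i.e. `(d+1)`-element subsets) on the vertex set `V`. -/
def simplices (V : Finset ℕ) (d : ℕ) : Finset (Finset ℕ) :=
  V.powerset.filter fun σ => σ.card = d + 1

/-- The mod-2 boundary of a set `X` of simplices: the set of faces `τ` of codimension one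
(`|τ| + 1 = |σ|`) contained in an odd number of members of `X`. -/
def bd (X : Finset (Finset ℕ)) : Finset (Finset ℕ) :=
  (X.biUnion fun σ => σ.powerset).filter
    fun τ => Odd (X.filter fun σ => τ ⊆ σ ∧ τ.card + 1 = σ.card).card

/-- A set of simplices is acyclic (a forest) over `F_2` if no nonempty subset has
empty boundary. -/
def IsAcyclic (F : Finset (Finset ℕ)) : Prop :=
  ∀ Y ⊆ F, Y ≠ ∅ → bd Y ≠ ∅

/-- A `d`-hypertree on `V`: a maximal acyclic set of `d`-simplices on `V`. -/
def IsHypertreeOn (V : Finset ℕ) (d : ℕ) (T : Finset (Finset ℕ)) : Prop :=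
  T ⊆ simplices V d ∧ IsAcyclic T ∧
    ∀ G, T ⊆ G → G ⊆ simplices V d → IsAcyclic G → G = T

/-- A simple cycle over `F_2`: a nonempty set with empty boundary, no nonempty proper
subset of which has empty boundary. -/
def IsSimpleCycle (Z : Finset (Finset ℕ)) : Prop :=
  Z ≠ ∅ ∧ bd Z = ∅ ∧ ∀ Y ⊂ Z, Y ≠ ∅ → bd Y ≠ ∅

/-- Collapsibility: `X` can be reduced to `∅` by repeatedly removing a simplex `σ ∈ X`
containing a codimension-one face contained in no other current member of `X`. -/
inductive Collapsible : Finset (Finset ℕ) → Prop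
  | empty : Collapsible ∅
  | step (X : Finset (Finset ℕ)) (σ τ : Finset ℕ) (hσ : σ ∈ X) (hτ : τ ⊆ σ)
      (hcard : τ.card + 1 = σ.card) (huniq : ∀ σ' ∈ X, τ ⊆ σ' → σ' = σ)
      (h : Collapsible (X.erase σ)) : Collapsible X

/-- The cone over `X` with apex `v`. -/
def cone (v : ℕ) (X : Finset (Finset ℕ)) : Finset (Finset ℕ) :=
  X.image (insert v)

/-- The link of the vertex `v` in `X`. -/
def link (v : ℕ) (X : Finset (Finset ℕ)) : Finset (Finset ℕ) :=
  (X.filter fun σ => v ∈ σ).image fun σ => σ.erase v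

/-- `fill Z T`: the subset `F ⊆ T` with `∂F = Z` (when it exists; it is unique when `T`
is a hypertree and `Z` a cycle). -/
noncomputable def fill (Z T : Finset (Finset ℕ)) : Finset (Finset ℕ) :=
  if h : ∃ F, F ⊆ T ∧ bd F = Z then h.choose else ∅

/-- The average filling-volume `μ(T)` of a `d`-hypertree `T` on `[n]`. -/
noncomputable def fillVolAvg (n d : ℕ) (T : Finset (Finset ℕ)) : ℝ :=
  (∑ σ ∈ simplices (rng n) d, ((fill (bd {σ}) T).card : ℝ)) / (n.choose (d + 1) : ℝ)

open Classical in
/-- The cut of `τ` in `T`: the set of `d`-simplices `σ` on `[n]` such that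
`T ⊕ {τ} ⊕ {σ}` is a `d`-hypertree on `[n]`. -/
noncomputable def cut (n d : ℕ) (τ : Finset ℕ) (T : Finset (Finset ℕ)) : Finset (Finset ℕ) :=
  (simplices (rng n) d).filter fun σ => IsHypertreeOn (rng n) d ((T ∆ {τ}) ∆ {σ})

/-!
Work over `F_2` and split a family `X` of simplices at a vertex `v` into its link `L` and its
deletion `R`, so that `X` is the union of `R` and of the cone over `L` with apex `v`. Then `∂X = ∅`
if and only if `∂L = ∅` and `∂R = L`, and `X` is acyclic as soon as `L` and `R` are. Hence, if `G`
is a simple `(d-1)`-cycle avoiding `v` and `F` is an acyclic set of `d`-simplices avoiding `v` with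
`∂F = G`, the cone over `G` together with `F` is a simple `d`-cycle with `|G| + |F|` members. The
number `C(N, d) - C(N, d - 2)` satisfies Pascal's rule, so it is enough to find, for every nonempty
`(d-1)`-cycle on `N + 1` vertices, an acyclic filling with at least that many members; the
`(-1)`-cycle `{∅}` starts the induction.

Such a filling of a cycle `Z` is built one vertex at a time. With `L` and `R` the link and deletion
of `Z` at `v`, take a filling `G` of `L`, then a filling `F` of the cycle `G ⊕ R`, both avoiding
`v`; the cone over `G` together with `F` fills `Z`. The only obstruction is that `G ⊕ R` may be
empty. If the bound on `|F|` is nonpositive, then `F = ∅` will do. Otherwise `G ≠ R` can be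
arranged, since the induction produces not one filling but at least `|V| - 2d` distinct ones.
-/

/-- The members of `X` having `τ` as a codimension-one face; `bd X` consists of the faces for which
their number is odd. -/
def cofacets (X : Finset (Finset ℕ)) (τ : Finset ℕ) : Finset (Finset ℕ) :=
  {σ ∈ X | τ ⊆ σ ∧ #τ + 1 = #σ}

section Boundary

variable {X : Finset (Finset ℕ)} {v : ℕ} {τ : Finset ℕ}

lemma mem_cofacets {σ : Finset ℕ} : σ ∈ cofacets X τ ↔ σ ∈ X ∧ τ ⊆ σ ∧ #τ + 1 = #σ :=
  mem_filter

lemma mem_bd : τ ∈ bd X ↔ Odd #(cofacets X τ) := by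
  refine mem_filter.trans (and_iff_right_of_imp fun hodd ↦ ?_)
  obtain ⟨σ, hσ⟩ := card_pos.1 hodd.pos
  obtain ⟨hσX, hτσ, -⟩ := mem_cofacets.1 hσ
  exact mem_biUnion.2 ⟨σ, hσX, mem_powerset.2 hτσ⟩

lemma odd_card_symmDiff {α : Type*} [DecidableEq α] (s t : Finset α) :
    Odd #(s ∆ t) ↔ ¬(Odd #s ↔ Odd #t) := by
  have hs := card_sdiff_add_card_inter s t
  have ht := card_sdiff_add_card_inter t s
  have hst : #(s ∆ t) = #(s \ t) + #(t \ s) := card_union_of_disjoint disjoint_sdiff_sdiff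
  rw [inter_comm] at ht
  grind

lemma bd_empty : bd ∅ = ∅ := by simp [bd]

lemma bd_singleton_empty : bd {∅} = ∅ := by
  ext τ
  simp [mem_bd, cofacets, filter_singleton]

lemma bd_singleton_vertex (v : ℕ) : bd {{v}} = {∅} := by
  ext τ
  have hcofacets : cofacets {{v}} τ = if τ = ∅ then {{v}} else ∅ := by
    grind [mem_cofacets, card_eq_zero, card_singleton]
  rw [mem_bd, hcofacets]
  split_ifs with h <;> simp [h]

lemma bd_symmDiff (X Y : Finset (Finset ℕ)) : bd (X ∆ Y) = bd X ∆ bd Y := by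
  ext τ
  have hXY : cofacets (X ∆ Y) τ = cofacets X τ ∆ cofacets Y τ := by grind [cofacets, mem_symmDiff]
  rw [mem_symmDiff, mem_bd, mem_bd, mem_bd, hXY, odd_card_symmDiff]
  tauto

lemma notMem_of_mem_bd (hX : ∀ σ ∈ X, v ∉ σ) (hτ : τ ∈ bd X) : v ∉ τ := by
  obtain ⟨σ, hσ⟩ := card_pos.1 (mem_bd.1 hτ).pos
  obtain ⟨hσX, hτσ, -⟩ := mem_cofacets.1 hσ
  exact fun hv ↦ hX σ hσX (hτσ hv)

end Boundary

section LinkDeletion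

variable {G F X Y : Finset (Finset ℕ)} {v : ℕ} {τ : Finset ℕ}

lemma link_eq_memberSubfamily (v : ℕ) (X : Finset (Finset ℕ)) : link v X = X.memberSubfamily v :=
  rfl

lemma mem_link : τ ∈ link v X ↔ insert v τ ∈ X ∧ v ∉ τ := mem_memberSubfamily

lemma cone_link_union_nonMemberSubfamily (v : ℕ) (X : Finset (Finset ℕ)) :
    cone v (link v X) ∪ X.nonMemberSubfamily v = X := by
  rw [cone, link_eq_memberSubfamily, image_insert_memberSubfamily, nonMemberSubfamily,
    filter_union_filter_not_eq]

lemma card_link_add_card_nonMemberSubfamily (v : ℕ) (X : Finset (Finset ℕ)) :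
    #(link v X) + #(X.nonMemberSubfamily v) = #X :=
  card_memberSubfamily_add_card_nonMemberSubfamily v X

lemma link_cone_union (hG : ∀ σ ∈ G, v ∉ σ) (hF : ∀ σ ∈ F, v ∉ σ) :
    link v (cone v G ∪ F) = G := by
  have hF' : F.memberSubfamily v = ∅ := by grind [mem_memberSubfamily]
  rw [link_eq_memberSubfamily, memberSubfamily_union, cone, memberSubfamily_image_insert hG, hF',
    union_empty]

lemma nonMemberSubfamily_cone_union (hF : ∀ σ ∈ F, v ∉ σ) :
    (cone v G ∪ F).nonMemberSubfamily v = F := by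
  rw [nonMemberSubfamily_union, cone, nonMemberSubfamily_image_insert, empty_union,
    nonMemberSubfamily, filter_true_of_mem hF]

lemma link_mono (v : ℕ) (hYX : Y ⊆ X) : link v Y ⊆ link v X :=
  image_subset_image (filter_subset_filter _ hYX)

lemma nonMemberSubfamily_mono (v : ℕ) (hYX : Y ⊆ X) :
    Y.nonMemberSubfamily v ⊆ X.nonMemberSubfamily v :=
  filter_subset_filter _ hYX

lemma card_cofacets_insert (hv : v ∉ τ) (X : Finset (Finset ℕ)) :
    #(cofacets X (insert v τ)) = #(cofacets (link v X) τ) := by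
  have hlink : cofacets (link v X) τ = link v (cofacets X (insert v τ)) := by
    ext ρ
    simp only [mem_cofacets, mem_link]
    grind [card_insert_of_notMem, insert_subset_insert_iff]
  have hdel : (cofacets X (insert v τ)).nonMemberSubfamily v = ∅ := by
    grind [mem_nonMemberSubfamily, mem_cofacets]
  rw [hlink, ← card_link_add_card_nonMemberSubfamily v, hdel, card_empty, add_zero]

lemma cofacets_of_notMem (hv : v ∉ τ) (X : Finset (Finset ℕ)) :
    cofacets X τ = cofacets (X.nonMemberSubfamily v) τ ∪
      {σ ∈ ({insert v τ} : Finset (Finset ℕ)) | σ ∈ X} := by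
  ext σ
  simp only [mem_union, mem_cofacets, mem_nonMemberSubfamily, mem_filter, mem_singleton]
  constructor
  · rintro ⟨hσX, hτσ, hcard⟩
    by_cases hvσ : v ∈ σ
    · refine Or.inr ⟨(eq_of_subset_of_card_le (insert_subset hvσ hτσ) ?_).symm, hσX⟩
      rw [card_insert_of_notMem hv, hcard]
    · exact Or.inl ⟨⟨hσX, hvσ⟩, hτσ, hcard⟩
  · grind [card_insert_of_notMem]

lemma link_sdiff (v : ℕ) (X Y : Finset (Finset ℕ)) : link v (X \ Y) = link v X \ link v Y := by
  ext τ
  grind [mem_link]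

lemma link_bd (v : ℕ) (X : Finset (Finset ℕ)) : link v (bd X) = bd (link v X) := by
  ext τ
  by_cases hv : v ∈ τ
  · grind [mem_link, notMem_of_mem_bd]
  · rw [mem_link, mem_bd, mem_bd, card_cofacets_insert hv, and_iff_left hv]

lemma nonMemberSubfamily_bd (v : ℕ) (X : Finset (Finset ℕ)) :
    (bd X).nonMemberSubfamily v = link v X ∆ bd (X.nonMemberSubfamily v) := by
  ext τ
  rw [mem_nonMemberSubfamily, mem_symmDiff, mem_link]
  by_cases hv : v ∈ τ
  · grind [mem_nonMemberSubfamily, notMem_of_mem_bd]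
  · have hdisj : Disjoint (cofacets (X.nonMemberSubfamily v) τ)
        {σ ∈ ({insert v τ} : Finset (Finset ℕ)) | σ ∈ X} := by
      grind [disjoint_left, mem_cofacets, mem_nonMemberSubfamily]
    rw [mem_bd, mem_bd, cofacets_of_notMem hv, card_union_of_disjoint hdisj, filter_singleton]
    grind

lemma bd_cone_union (hG : ∀ σ ∈ G, v ∉ σ) (hF : ∀ σ ∈ F, v ∉ σ) :
    bd (cone v G ∪ F) = cone v (bd G) ∪ G ∆ bd F := by
  rw [← cone_link_union_nonMemberSubfamily v (bd _), link_bd, nonMemberSubfamily_bd,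
    link_cone_union hG hF, nonMemberSubfamily_cone_union hF]

lemma bd_link_of_bd_eq_empty (v : ℕ) (hX : bd X = ∅) : bd (link v X) = ∅ := by
  rw [← link_bd, hX]
  rfl

lemma bd_nonMemberSubfamily_of_bd_eq_empty (v : ℕ) (hX : bd X = ∅) :
    bd (X.nonMemberSubfamily v) = link v X := by
  have h := nonMemberSubfamily_bd v X
  rw [hX] at h
  exact (symmDiff_eq_bot.1 h.symm).symm

end LinkDeletion

section Acyclic

variable {F X Y : Finset (Finset ℕ)} {v : ℕ}

lemma IsAcyclic.eq_empty (hF : IsAcyclic F) (hYF : Y ⊆ F) (hY : bd Y = ∅) : Y = ∅ :=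
  not_ne_iff.1 fun hne ↦ hF Y hYF hne hY

lemma isAcyclic_empty : IsAcyclic ∅ :=
  fun _ hY hne ↦ (hne (subset_empty.1 hY)).elim

lemma isAcyclic_singleton_vertex (v : ℕ) : IsAcyclic {{v}} := by
  intro Y hY hne
  rw [(subset_singleton_iff.1 hY).resolve_left hne, bd_singleton_vertex]
  exact singleton_ne_empty ∅

lemma eq_empty_of_link_eq_empty (hX : IsAcyclic (X.nonMemberSubfamily v)) (hYX : Y ⊆ X)
    (hY : bd Y = ∅) (hlink : link v Y = ∅) : Y = ∅ := by
  have hdel : Y.nonMemberSubfamily v = ∅ := hX.eq_empty (nonMemberSubfamily_mono v hYX) <| by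
    rw [bd_nonMemberSubfamily_of_bd_eq_empty v hY, hlink]
  rw [← card_eq_zero, ← card_link_add_card_nonMemberSubfamily v, hlink, hdel, card_empty]

lemma isAcyclic_of_link (hlink : IsAcyclic (link v X)) (hdel : IsAcyclic (X.nonMemberSubfamily v)) :
    IsAcyclic X :=
  fun _ hYX hne hY ↦ hne <| eq_empty_of_link_eq_empty hdel hYX hY <|
    hlink.eq_empty (link_mono v hYX) (bd_link_of_bd_eq_empty v hY)

lemma isSimpleCycle_singleton_empty : IsSimpleCycle {∅} :=
  ⟨singleton_ne_empty ∅, bd_singleton_empty,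
    fun _ hY hne ↦ (hne (eq_empty_of_ssubset_singleton hY)).elim⟩

lemma isSimpleCycle_of_link (hlink : IsSimpleCycle (link v X))
    (hdel : IsAcyclic (X.nonMemberSubfamily v)) (hX : bd X = ∅) : IsSimpleCycle X := by
  obtain ⟨hlink_ne, -, hlink_min⟩ := hlink
  refine ⟨?_, hX, fun Y hYX hne hY ↦ ?_⟩
  · rintro rfl
    exact hlink_ne rfl
  have hYlink : link v Y = link v X := by
    by_contra h
    refine hlink_min _ ((link_mono v hYX.1).ssubset_of_ne h) (fun hempty ↦ hne ?_)
      (bd_link_of_bd_eq_empty v hY)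
    exact eq_empty_of_link_eq_empty hdel hYX.1 hY hempty
  have hsdiff : bd (X \ Y) = ∅ := by
    rw [← symmDiff_of_ge hYX.1, bd_symmDiff, hX, hY, symmDiff_self, bot_eq_empty]
  have hsdiff_link : link v (X \ Y) = ∅ := by rw [link_sdiff, hYlink, Finset.sdiff_self]
  exact hYX.2 <| sdiff_eq_empty_iff_subset.1 <|
    eq_empty_of_link_eq_empty hdel sdiff_subset hsdiff hsdiff_link

end Acyclic

/-- The number `C(N, d) - C(N, d - 2)`, with `C(N, k) = 0` for `k < 0`. It is the number of
`d`-simplices required of a filling on `N + 1` vertices in the induction. -/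
def sizeBound (N d : ℕ) : ℤ :=
  (N.choose d : ℤ) - if 2 ≤ d then (N.choose (d - 2) : ℤ) else 0

lemma sizeBound_zero (N : ℕ) : sizeBound N 0 = 1 := by simp [sizeBound]

lemma sizeBound_succ_succ (N d : ℕ) :
    sizeBound (N + 1) (d + 1) = sizeBound N d + sizeBound N (d + 1) := by
  rcases d with _ | _ | d <;> simp [sizeBound, Nat.choose_succ_succ'] <;> ring

lemma choose_add_two_le_choose {N d : ℕ} (h : N ≤ 2 * d + 2) : N.choose (d + 2) ≤ N.choose d := by
  refine Nat.le_of_mul_le_mul_right (c := (d + 1) * (d + 2)) ?_ (by positivity)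
  calc N.choose (d + 2) * ((d + 1) * (d + 2))
      = N.choose (d + 2) * (d + 2) * (d + 1) := by ring
    _ = N.choose (d + 1) * (d + 1) * (N - (d + 1)) := by rw [Nat.choose_succ_right_eq]; ring
    _ = N.choose d * ((N - (d + 1)) * (N - d)) := by rw [Nat.choose_succ_right_eq]; ring
    _ ≤ N.choose d * ((d + 1) * (d + 2)) := by gcongr <;> lia

lemma sizeBound_succ_nonpos {N d : ℕ} (h : N ≤ 2 * d) : sizeBound N (d + 1) ≤ 0 := by
  rcases d with _ | d
  · simp [sizeBound, Nat.le_zero.1 h]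
  · simpa [sizeBound] using choose_add_two_le_choose h

open Classical in
/-- The acyclic sets of `d`-simplices on `V` with boundary `Z` and at least `sizeBound (#V - 1) d`
members. Coning off a simple cycle `Z` and adding such a filling of it gives a large simple cycle of
one dimension more. -/
noncomputable def largeFillings (V : Finset ℕ) (d : ℕ) (Z : Finset (Finset ℕ)) :
    Finset (Finset (Finset ℕ)) :=
  {F ∈ (powersetCard (d + 1) V).powerset | IsAcyclic F ∧ bd F = Z ∧ sizeBound (#V - 1) d ≤ #F}

section LargeFillings

variable {V s : Finset ℕ} {d v : ℕ} {F G H W X Z : Finset (Finset ℕ)}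

lemma simplices_eq_powersetCard (V : Finset ℕ) (d : ℕ) : simplices V d = powersetCard (d + 1) V :=
  powersetCard_eq_filter.symm

lemma mem_largeFillings : F ∈ largeFillings V d Z ↔
    F ⊆ powersetCard (d + 1) V ∧ IsAcyclic F ∧ bd F = Z ∧ sizeBound (#V - 1) d ≤ #F := by
  simp only [largeFillings, mem_filter, mem_powerset]

lemma notMem_of_subset_powersetCard (hv : v ∉ s) (hX : X ⊆ powersetCard d s) :
    ∀ σ ∈ X, v ∉ σ :=
  fun _ hσ hvσ ↦ hv ((mem_powersetCard.1 (hX hσ)).1 hvσ)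

lemma cone_union_subset_powersetCard (hv : v ∉ s) (hG : G ⊆ powersetCard d s)
    (hF : F ⊆ powersetCard (d + 1) s) : cone v G ∪ F ⊆ powersetCard (d + 1) (insert v s) := by
  rw [powersetCard_succ_insert hv, union_comm]
  exact union_subset_union hF (image_subset_image hG)

lemma link_subset_powersetCard (hX : X ⊆ powersetCard (d + 1) (insert v s)) :
    link v X ⊆ powersetCard d s := by
  intro τ hτ
  obtain ⟨hτX, hvτ⟩ := mem_link.1 hτ
  obtain ⟨hsub, hcard⟩ := mem_powersetCard.1 (hX hτX)
  rw [card_insert_of_notMem hvτ] at hcard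
  exact mem_powersetCard.2 ⟨(insert_subset_insert_iff hvτ).1 hsub, Nat.succ_injective hcard⟩

lemma nonMemberSubfamily_subset_powersetCard (hX : X ⊆ powersetCard d (insert v s)) :
    X.nonMemberSubfamily v ⊆ powersetCard d s := by
  intro τ hτ
  obtain ⟨hτX, hvτ⟩ := mem_nonMemberSubfamily.1 hτ
  obtain ⟨hsub, hcard⟩ := mem_powersetCard.1 (hX hτX)
  exact mem_powersetCard.2 ⟨(subset_insert_iff_of_notMem hvτ).1 hsub, hcard⟩

lemma sizeBound_card_insert (hv : v ∉ s) (hs : s.Nonempty) :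
    sizeBound (#(insert v s) - 1) (d + 1) =
      sizeBound (#s - 1) d + sizeBound (#s - 1) (d + 1) := by
  rw [← sizeBound_succ_succ, card_insert_of_notMem hv, Nat.add_sub_cancel,
    Nat.sub_add_cancel hs.card_pos]

lemma singleton_vertex_mem_largeFillings (hv : v ∈ V) : {{v}} ∈ largeFillings V 0 {∅} :=
  mem_largeFillings.2 ⟨by simpa using hv, isAcyclic_singleton_vertex v, bd_singleton_vertex v,
    by simp [sizeBound_zero]⟩

lemma card_le_card_largeFillings_zero (V : Finset ℕ) : #V ≤ #(largeFillings V 0 {∅}) :=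
  card_le_card_of_injOn (fun v ↦ {{v}}) (fun _ hv ↦ singleton_vertex_mem_largeFillings hv)
    fun _ _ _ _ h ↦ singleton_injective (singleton_injective h)

lemma empty_mem_largeFillings (h : #V ≤ 2 * d + 1) : ∅ ∈ largeFillings V (d + 1) ∅ :=
  mem_largeFillings.2 ⟨empty_subset _, isAcyclic_empty, bd_empty,
    sizeBound_succ_nonpos (by lia)⟩

lemma cone_union_mem_largeFillings (hv : v ∉ s) (hs : s.Nonempty)
    (hG : G ∈ largeFillings s d W) (hF : F ∈ largeFillings s (d + 1) (G ∆ H)) :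
    cone v G ∪ F ∈ largeFillings (insert v s) (d + 1) (cone v W ∪ H) := by
  obtain ⟨hGs, hGacyclic, rfl, hGcard⟩ := mem_largeFillings.1 hG
  obtain ⟨hFs, hFacyclic, hFbd, hFcard⟩ := mem_largeFillings.1 hF
  have hGv := notMem_of_subset_powersetCard hv hGs
  have hFv := notMem_of_subset_powersetCard hv hFs
  have hlink := link_cone_union hGv hFv
  have hdel := nonMemberSubfamily_cone_union (G := G) hFv
  refine mem_largeFillings.2 ⟨cone_union_subset_powersetCard hv hGs hFs, ?_, ?_, ?_⟩
  · exact isAcyclic_of_link (hlink.symm ▸ hGacyclic) (hdel.symm ▸ hFacyclic)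
  · rw [bd_cone_union hGv hFv, hFbd, symmDiff_symmDiff_cancel_left]
  · rw [sizeBound_card_insert hv hs, ← card_link_add_card_nonMemberSubfamily v, hlink, hdel]
    push_cast
    exact add_le_add hGcard hFcard

lemma card_le_card_largeFillings_insert {𝒢 : Finset (Finset (Finset ℕ))} (hv : v ∉ s)
    (hs : s.Nonempty) (h𝒢 : 𝒢 ⊆ largeFillings s d (link v Z))
    (hfill : ∀ G ∈ 𝒢, (largeFillings s (d + 1) (G ∆ Z.nonMemberSubfamily v)).Nonempty) :
    #𝒢 ≤ #(largeFillings (insert v s) (d + 1) Z) := by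
  -- A filling `G` of the link of `Z` is recovered as the link of the filling of `Z` built from it.
  refine card_le_card_of_surjOn (link v) fun G hG ↦ ?_
  obtain ⟨F, hF⟩ := hfill G hG
  refine ⟨cone v G ∪ F, ?_, ?_⟩
  · simpa only [cone_link_union_nonMemberSubfamily, mem_coe] using
      cone_union_mem_largeFillings hv hs (h𝒢 hG) hF
  · exact link_cone_union
      (notMem_of_subset_powersetCard hv (mem_largeFillings.1 (h𝒢 hG)).1)
      (notMem_of_subset_powersetCard hv (mem_largeFillings.1 hF).1)

lemma exists_insert_link_nonempty (hZV : Z ⊆ powersetCard (d + 1) V) (hZ : Z.Nonempty) :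
    ∃ v s, v ∉ s ∧ insert v s = V ∧ (link v Z).Nonempty := by
  obtain ⟨σ, hσ⟩ := hZ
  obtain ⟨hσV, hcard⟩ := mem_powersetCard.1 (hZV hσ)
  obtain ⟨v, hv⟩ := card_pos.1 (d.succ_pos.trans_eq hcard.symm)
  exact ⟨v, V.erase v, notMem_erase v V, insert_erase (hσV hv), σ.erase v,
    mem_link.2 ⟨(insert_erase hv).symm ▸ hσ, notMem_erase v σ⟩⟩

lemma nonempty_of_link_nonempty (hZV : Z ⊆ powersetCard (d + 1) (insert v s)) (hZ : bd Z = ∅)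
    (hlink : (link v Z).Nonempty) : s.Nonempty := by
  have hdel : (Z.nonMemberSubfamily v).Nonempty := by
    rw [nonempty_iff_ne_empty]
    intro h
    rw [← bd_nonMemberSubfamily_of_bd_eq_empty v hZ, h, bd_empty] at hlink
    exact not_nonempty_empty hlink
  exact (hdel.mono (nonMemberSubfamily_subset_powersetCard hZV)).elim fun σ hσ ↦
    ((powersetCard_nonempty.1 ⟨σ, hσ⟩).trans_lt' d.succ_pos |> card_pos.1)

theorem max_one_le_card_largeFillings (hV : V.Nonempty) (hZV : Z ⊆ powersetCard d V)
    (hZ : Z.Nonempty) (hbd : bd Z = ∅) : max 1 (#V - 2 * d) ≤ #(largeFillings V d Z) := by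
  induction V using Finset.strongInduction generalizing d Z with
  | H V ih =>
  rcases d with _ | d
  · rw [powersetCard_zero, hZ.subset_singleton_iff] at hZV
    subst hZV
    have := card_le_card_largeFillings_zero V
    have := hV.card_pos
    lia
  obtain ⟨v, s, hv, rfl, hlink⟩ := exists_insert_link_nonempty hZV hZ
  have hs : s.Nonempty := nonempty_of_link_nonempty hZV hbd hlink
  set 𝒢 := largeFillings s d (link v Z)
  have h𝒢 : max 1 (#s - 2 * d) ≤ #𝒢 := ih s (ssubset_insert hv) hs
    (link_subset_powersetCard hZV) hlink (bd_link_of_bd_eq_empty v hbd)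
  have hfill : ∀ G ∈ 𝒢, G ≠ Z.nonMemberSubfamily v →
      (largeFillings s (d + 1) (G ∆ Z.nonMemberSubfamily v)).Nonempty := by
    intro G hG hne
    obtain ⟨hGs, -, hGbd, -⟩ := mem_largeFillings.1 hG
    refine card_pos.1 ((le_max_left 1 _).trans (ih s (ssubset_insert hv) hs ?_ ?_ ?_))
    · exact symmDiff_le_sup.trans
        (union_subset hGs (nonMemberSubfamily_subset_powersetCard hZV))
    · exact symmDiff_nonempty.2 hne
    · rw [bd_symmDiff, hGbd, bd_nonMemberSubfamily_of_bd_eq_empty v hbd, symmDiff_self,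
        bot_eq_empty]
  rw [card_insert_of_notMem hv]
  by_cases hsmall : #s ≤ 2 * d + 1
  · have h : #𝒢 ≤ _ := card_le_card_largeFillings_insert hv hs subset_rfl fun G hG ↦ by
      rcases eq_or_ne G (Z.nonMemberSubfamily v) with rfl | hne
      · rw [symmDiff_self]
        exact ⟨∅, empty_mem_largeFillings hsmall⟩
      · exact hfill G hG hne
    lia
  · have h := card_le_card_largeFillings_insert hv hs (erase_subset (Z.nonMemberSubfamily v) 𝒢)
      fun G hG ↦ hfill G (mem_of_mem_erase hG) (ne_of_mem_erase hG)
    have := pred_card_le_card_erase (s := 𝒢) (a := Z.nonMemberSubfamily v)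
    lia

end LargeFillings

section LargeCycle

variable {V s : Finset ℕ} {d v : ℕ} {G : Finset (Finset ℕ)}

lemma exists_isSimpleCycle_insert (hv : v ∉ s) (hs : s.Nonempty) (hGs : G ⊆ powersetCard d s)
    (hG : IsSimpleCycle G) : ∃ Z ⊆ powersetCard (d + 1) (insert v s), IsSimpleCycle Z ∧
      #G + sizeBound (#s - 1) d ≤ #Z := by
  obtain ⟨F, hF⟩ := card_pos.1 <| (le_max_left 1 _).trans <|
    max_one_le_card_largeFillings hs hGs (nonempty_iff_ne_empty.2 hG.1) hG.2.1
  obtain ⟨hFs, hFacyclic, hFbd, hFcard⟩ := mem_largeFillings.1 hF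
  have hGv := notMem_of_subset_powersetCard hv hGs
  have hFv := notMem_of_subset_powersetCard hv hFs
  have hlink := link_cone_union hGv hFv
  have hdel := nonMemberSubfamily_cone_union (G := G) hFv
  refine ⟨cone v G ∪ F, cone_union_subset_powersetCard hv hGs hFs, ?_, ?_⟩
  · refine isSimpleCycle_of_link (hlink.symm ▸ hG) (hdel.symm ▸ hFacyclic) ?_
    rw [bd_cone_union hGv hFv, hG.2.1, hFbd, symmDiff_self]
    rfl
  · rw [← card_link_add_card_nonMemberSubfamily v (cone v G ∪ F), hlink, hdel]
    push_cast
    gcongr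

theorem exists_isSimpleCycle_sizeBound_lt_card (hV : d + 2 ≤ #V) :
    ∃ Z ⊆ powersetCard (d + 1) V, IsSimpleCycle Z ∧ sizeBound (#V - 1) d < #Z := by
  induction d generalizing V with
  | zero =>
    obtain ⟨v, s, hv, rfl, hcard⟩ := card_eq_succ.1 (Nat.sub_add_cancel (by lia : 1 ≤ #V)).symm
    obtain ⟨Z, hZs, hZ, hZcard⟩ := exists_isSimpleCycle_insert hv (card_pos.1 (by lia))
      (powersetCard_zero s).ge isSimpleCycle_singleton_empty
    refine ⟨Z, hZs, hZ, ?_⟩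
    simp only [sizeBound_zero, card_singleton] at hZcard ⊢
    lia
  | succ d ih =>
    obtain ⟨v, s, hv, rfl, hcard⟩ := card_eq_succ.1 (Nat.sub_add_cancel (by lia : 1 ≤ #V)).symm
    obtain ⟨G, hGs, hG, hGcard⟩ := ih (V := s) (by lia)
    have hs : s.Nonempty := card_pos.1 (by lia)
    obtain ⟨Z, hZs, hZ, hZcard⟩ := exists_isSimpleCycle_insert hv hs hGs hG
    refine ⟨Z, hZs, hZ, ?_⟩
    rw [sizeBound_card_insert hv hs]
    lia

end LargeCycle

/-- For every `d ≥ 1` and `n ≥ d+2`, there is a simple `d`-cycle on `[n]` over `F_2` of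
size at least `C(n-1,d) − C(n-1,d-2) + 1` (with `C(m,k) = 0` for `k < 0`). -/
theorem exists_large_simple_cycle (d n : ℕ) (hd : 1 ≤ d) (hn : d + 2 ≤ n) :
    ∃ Z, Z ⊆ simplices (rng n) d ∧ IsSimpleCycle Z ∧
      ((n - 1).choose d : ℤ) - (if 2 ≤ d then ((n - 1).choose (d - 2) : ℤ) else 0) + 1 ≤
        (Z.card : ℤ) := by
  have hcard : #(rng n) = n := by simp [rng]
  obtain ⟨Z, hZn, hZ, hZcard⟩ := exists_isSimpleCycle_sizeBound_lt_card (hcard.symm ▸ hn)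
  rw [hcard] at hZcard
  exact ⟨Z, (simplices_eq_powersetCard (rng n) d).symm ▸ hZn, hZ, hZcard⟩
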